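/- arXiv:1401.4209 — 3 statements merged into one kernel-verified Lean document; each statement's English description precedes it below -/
import Mathlib

section
/- Let A : Matrix (Fin n) (Fin n) ℂ, let λ : Fin n → ℂ be pairwise distinct eigenvalues of A, and let w : Fin n → (Fin n → ℂ) be corresponding left eigenvectors (w j ≠ 0 and Matrix.vecMul (w j) A = λ j • w j for every j). Then the minimum, over all b : Fin n → ℂ such that (A, b) is controllable, of the number of nonzero entries ‖b‖₀ of b, equals the minimum cardinality of a set S ⊆ Fin n such that for every j : Fin n there exists k ∈ S with w j k ≠ 0 (i.e., the minimum cardinality of a set cover of {1,…,n} by the sets S_i = {j : w j i ≠ 0}); moreover both minima are attained. -/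
open Matrix

/-- The pair `(A, b)` is controllable if the Kalman rank condition holds:
the span of `A ^ k *ᵥ b`, `k = 0, …, n-1`, is all of `Fin n → ℂ`. -/
def Controllable {n : ℕ} (A : Matrix (Fin n) (Fin n) ℂ) (b : Fin n → ℂ) : Prop :=
  Submodule.span ℂ (Set.range fun k : Fin n => (A ^ (k : ℕ)) *ᵥ b) = ⊤

/-!
Pairing `A ^ k *ᵥ b` with a left eigenvector `w j` multiplies `w j ⬝ᵥ b` by `lam j ^ k`. Hence a
left eigenvector orthogonal to `b` is orthogonal to every `A ^ k *ᵥ b`, which obstructs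
controllability; conversely, if no `w j` is orthogonal to `b`, invertibility of the Vandermonde
matrix of the distinct `lam j` makes the vectors `A ^ k *ᵥ b` independent. So the controllable `b`
are those avoiding the hyperplanes `(w j)ᗮ`. The support of such a `b` meets the support of every
`w j`; conversely, if `S` meets them all, then each hyperplane cuts the space of vectors supported
in `S` in a proper subspace, and finitely many proper subspaces do not cover a vector space over an
infinite field.
-/

/-- The `m`-th Krylov subspace of `(A, b)`, spanned by `b, A b, …, A ^ (m - 1) b`. For `A` of
size `n` over `ℂ`, `Controllable A b` unfolds to `krylovSubspace A b n = ⊤`. -/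
def krylovSubspace {R ι : Type*} [CommSemiring R] [Fintype ι] [DecidableEq ι]
    (A : Matrix ι ι R) (b : ι → R) (m : ℕ) : Submodule R (ι → R) :=
  Submodule.span R (Set.range fun k : Fin m => (A ^ (k : ℕ)) *ᵥ b)

section LeftEigenvector

variable {R ι : Type*} [Fintype ι] [DecidableEq ι]

theorem vecMul_pow_eq_pow_smul [CommSemiring R] {A : Matrix ι ι R} {μ : R} {w : ι → R}
    (h : w ᵥ* A = μ • w) (k : ℕ) : w ᵥ* A ^ k = μ ^ k • w := by
  induction k with
  | zero => simp
  | succ k ih => rw [pow_succ, ← vecMul_vecMul, ih, smul_vecMul, h, smul_smul, pow_succ]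

theorem dotProduct_pow_mulVec_eq_pow_mul [CommSemiring R] {A : Matrix ι ι R} {μ : R} {w : ι → R}
    (h : w ᵥ* A = μ • w) (b : ι → R) (k : ℕ) :
    w ⬝ᵥ (A ^ k *ᵥ b) = μ ^ k * (w ⬝ᵥ b) := by
  rw [dotProduct_mulVec, vecMul_pow_eq_pow_smul h, smul_dotProduct, smul_eq_mul]

theorem dotProduct_ne_zero_of_krylovSubspace_eq_top [CommSemiring R] {A : Matrix ι ι R} {μ : R}
    {w b : ι → R} {m : ℕ} (hw : w ≠ 0) (h : w ᵥ* A = μ • w) (hb : krylovSubspace A b m = ⊤) :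
    w ⬝ᵥ b ≠ 0 := by
  intro hwb
  have pairing_eq_zero : dotProductBilin R R w = 0 :=
    LinearMap.ext_on_range hb fun k => by simp [dotProduct_pow_mulVec_eq_pow_mul h, hwb]
  exact hw (dotProduct_eq_zero w (LinearMap.congr_fun pairing_eq_zero))

theorem linearIndependent_pow_mulVec [CommRing R] [IsDomain R] {A : Matrix ι ι R} {m : ℕ}
    {lam : Fin m → R} {w : Fin m → ι → R} {b : ι → R} (hlam : Function.Injective lam)
    (heig : ∀ j, w j ᵥ* A = lam j • w j) (hb : ∀ j, w j ⬝ᵥ b ≠ 0) :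
    LinearIndependent R fun k : Fin m => A ^ (k : ℕ) *ᵥ b := by
  rw [Fintype.linearIndependent_iff]
  intro c hc
  have vandermonde_mul_eq_zero (j : Fin m) : ∑ k, c k * lam j ^ (k : ℕ) = 0 := by
    refine (mul_eq_zero.1 ?_).resolve_right (hb j)
    calc (∑ k, c k * lam j ^ (k : ℕ)) * (w j ⬝ᵥ b)
        = w j ⬝ᵥ ∑ k, c k • (A ^ (k : ℕ) *ᵥ b) := by
          simp only [dotProduct_sum, dotProduct_smul, dotProduct_pow_mulVec_eq_pow_mul (heig j),
            smul_eq_mul, Finset.sum_mul, mul_assoc]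
      _ = 0 := by rw [hc, dotProduct_zero]
  exact congrFun (eq_zero_of_forall_index_sum_mul_pow_eq_zero hlam vandermonde_mul_eq_zero)

theorem krylovSubspace_eq_top_iff_forall_dotProduct_ne_zero [Field R] {n : ℕ}
    {A : Matrix (Fin n) (Fin n) R} {lam : Fin n → R} {w : Fin n → Fin n → R} {b : Fin n → R}
    (hlam : Function.Injective lam) (hw : ∀ j, w j ≠ 0) (heig : ∀ j, w j ᵥ* A = lam j • w j) :
    krylovSubspace A b n = ⊤ ↔ ∀ j, w j ⬝ᵥ b ≠ 0 :=
  ⟨fun hb j => dotProduct_ne_zero_of_krylovSubspace_eq_top (hw j) (heig j) hb,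
    fun hb => (linearIndependent_pow_mulVec hlam heig hb).span_eq_top_of_card_eq_finrank' (by simp)⟩

end LeftEigenvector

section Support

variable {R ι : Type*} [Fintype ι]

theorem exists_mem_support_ne_zero_of_dotProduct_ne_zero [NonUnitalNonAssocSemiring R]
    {v b : ι → R} (h : v ⬝ᵥ b ≠ 0) : ∃ k ∈ Function.support b, v k ≠ 0 := by
  obtain ⟨k, -, hk⟩ := Finset.exists_ne_zero_of_sum_ne_zero h
  exact ⟨k, right_ne_zero_of_mul hk, left_ne_zero_of_mul hk⟩

theorem exists_support_subset_forall_dotProduct_ne_zero [Field R] [Infinite R] {κ : Type*}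
    [Finite κ] {w : κ → ι → R} {S : Set ι} (hS : ∀ j, ∃ k ∈ S, w j k ≠ 0) :
    ∃ b : ι → R, Function.support b ⊆ S ∧ ∀ j, w j ⬝ᵥ b ≠ 0 := by
  classical
  obtain ⟨b, hbS, hb⟩ := Module.Dual.exists_forall_mem_ne_zero_of_forall_exists
    (Pi.spanSubset R S) (fun j => dotProductBilin R R (w j)) fun j => by
      obtain ⟨k, hkS, hk⟩ := hS j
      refine ⟨Pi.single k 1, Pi.mem_spanSubset_iff.2 fun i hi => ?_, by simpa using hk⟩
      exact Pi.single_eq_of_ne (ne_of_mem_of_not_mem hkS hi).symm 1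
  exact ⟨b, Function.support_subset_iff'.2 (Pi.mem_spanSubset_iff.1 hbS), hb⟩

end Support

theorem stmt_6_general {K : Type*} [Field K] [Infinite K] {n : ℕ} (A : Matrix (Fin n) (Fin n) K)
    (lam : Fin n → K) (w : Fin n → Fin n → K) (hlam : Function.Injective lam)
    (hw : ∀ j, w j ≠ 0) (heig : ∀ j, w j ᵥ* A = lam j • w j) :
    ∃ m : ℕ,
      IsLeast {m | ∃ b, krylovSubspace A b n = ⊤ ∧ (Function.support b).ncard = m} m ∧
      IsLeast {m | ∃ S : Set (Fin n), (∀ j, ∃ k ∈ S, w j k ≠ 0) ∧ S.ncard = m} m := by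
  simp only [krylovSubspace_eq_top_iff_forall_dotProduct_ne_zero hlam hw heig]
  set covers := {m | ∃ S : Set (Fin n), (∀ j, ∃ k ∈ S, w j k ≠ 0) ∧ S.ncard = m}
  have covers_nonempty : covers.Nonempty :=
    ⟨_, Set.univ, fun j => by simpa using Function.ne_iff.1 (hw j), rfl⟩
  have support_mem_covers {b : Fin n → K} (hb : ∀ j, w j ⬝ᵥ b ≠ 0) :
      (Function.support b).ncard ∈ covers :=
    ⟨_, fun j => exists_mem_support_ne_zero_of_dotProduct_ne_zero (hb j), rfl⟩
  have least := isLeast_csInf covers_nonempty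
  obtain ⟨S, hS, hS_card⟩ := least.1
  obtain ⟨b, hbS, hb⟩ := exists_support_subset_forall_dotProduct_ne_zero hS
  have support_card_le : (Function.support b).ncard ≤ sInf covers :=
    hS_card ▸ Set.ncard_le_ncard hbS
  refine ⟨sInf covers, ⟨⟨b, hb, ?_⟩, ?_⟩, least⟩
  · exact support_card_le.antisymm (least.2 (support_mem_covers hb))
  · rintro _ ⟨b', hb', rfl⟩
    exact least.2 (support_mem_covers hb')

/-- for a matrix with `n` distinct eigenvalues and left
eigenvectors `w j`, the minimal number of nonzero entries of a `b` making
`(A, b)` controllable equals the minimal cardinality of a set cover of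
`{1, …, n}` by the sets `S_i = {j : w j i ≠ 0}`; both minima are attained. -/
theorem stmt_6 {n : ℕ} (A : Matrix (Fin n) (Fin n) ℂ) (lam : Fin n → ℂ)
    (w : Fin n → Fin n → ℂ)
    (hdist : ∀ j j' : Fin n, j ≠ j' → lam j ≠ lam j')
    (hw : ∀ j, w j ≠ 0)
    (heig : ∀ j, Matrix.vecMul (w j) A = lam j • w j) :
    sInf {m : ℕ | ∃ b : Fin n → ℂ, Controllable A b ∧ {i | b i ≠ 0}.ncard = m}
      = sInf {m : ℕ | ∃ S : Set (Fin n),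
          (∀ j : Fin n, ∃ k ∈ S, w j k ≠ 0) ∧ S.ncard = m} ∧
    sInf {m : ℕ | ∃ b : Fin n → ℂ, Controllable A b ∧ {i | b i ≠ 0}.ncard = m}
      ∈ {m : ℕ | ∃ b : Fin n → ℂ, Controllable A b ∧ {i | b i ≠ 0}.ncard = m} ∧
    sInf {m : ℕ | ∃ S : Set (Fin n),
          (∀ j : Fin n, ∃ k ∈ S, w j k ≠ 0) ∧ S.ncard = m}
      ∈ {m : ℕ | ∃ S : Set (Fin n),
          (∀ j : Fin n, ∃ k ∈ S, w j k ≠ 0) ∧ S.ncard = m} := by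
  obtain ⟨m, least_support, least_cover⟩ :=
    stmt_6_general A lam w (Function.injective_iff_pairwise_ne.2 fun j j' => hdist j j') hw heig
  exact ⟨least_support.csInf_eq.trans least_cover.csInf_eq.symm, least_support.csInf_mem,
    least_cover.csInf_mem⟩
end

section
/- Let A : Matrix (Fin n) (Fin n) ℂ have pairwise distinct eigenvalues λ : Fin n → ℂ with corresponding left eigenvectors w : Fin n → (Fin n → ℂ) (w j ≠ 0 and Matrix.vecMul (w j) A = λ j • w j for every j), and let S ⊆ Fin n be a set such that for every j : Fin n there exists k ∈ S with w j k ≠ 0. For c : S → ℂ, let b_c : Fin n → ℂ be the extension of c by zero outside S. Then for almost every c : S → ℂ (with respect to Lebesgue measure on S → ℂ), the pair (A, b_c) is controllable. -/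
open Matrix MeasureTheory

/-!
Let `K` be the matrix with columns `A ^ k *ᵥ b` and `W` the matrix with rows `w j`. Since `w j` is
a left eigenvector, `w j ⬝ᵥ (A ^ k *ᵥ b) = lam j ^ k * (w j ⬝ᵥ b)`, so `W * K` is a diagonal matrix
times the Vandermonde matrix of `lam`. Hence `K` is nonsingular as soon as no `w j ⬝ᵥ b` vanishes.
For `b` supported on `S`, each `w j ⬝ᵥ b` is a nonzero linear functional of the entries of `b` on
`S`, and the kernels of finitely many nonzero functionals form a null set.
-/

theorem vecMul_pow_of_vecMul_eq_smul {R m : Type*} [CommSemiring R] [Fintype m] [DecidableEq m]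
    {A : Matrix m m R} {v : m → R} {μ : R} (h : v ᵥ* A = μ • v) (k : ℕ) :
    v ᵥ* A ^ k = μ ^ k • v := by
  induction k with
  | zero => simp
  | succ k ih => rw [pow_succ, ← vecMul_vecMul, ih, smul_vecMul, h, smul_smul, pow_succ]

section ControllabilityMatrix

variable {R : Type*} [CommRing R] {n : ℕ} {A : Matrix (Fin n) (Fin n) R}
  {lam : Fin n → R} {w : Fin n → Fin n → R}

/-- The Kalman controllability matrix of the single-input pair `(A, b)`, whose `k`-th column is
`A ^ k *ᵥ b` for `k = 0, …, n - 1`. -/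
def controllabilityMatrix (A : Matrix (Fin n) (Fin n) R) (b : Fin n → R) :
    Matrix (Fin n) (Fin n) R :=
  of fun i k => (A ^ (k : ℕ) *ᵥ b) i

theorem of_mul_controllabilityMatrix (heig : ∀ j, w j ᵥ* A = lam j • w j) (b : Fin n → R) :
    of w * controllabilityMatrix A b = diagonal (fun j => w j ⬝ᵥ b) * vandermonde lam := by
  ext j k
  calc (of w * controllabilityMatrix A b) j k
    _ = w j ⬝ᵥ (A ^ (k : ℕ) *ᵥ b) := rfl
    _ = lam j ^ (k : ℕ) * (w j ⬝ᵥ b) := by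
      rw [dotProduct_mulVec, vecMul_pow_of_vecMul_eq_smul (heig j), smul_dotProduct, smul_eq_mul]
    _ = (diagonal (fun j => w j ⬝ᵥ b) * vandermonde lam) j k := by
      rw [diagonal_mul, vandermonde_apply, mul_comm]

theorem det_controllabilityMatrix_ne_zero [IsDomain R] (hlam : Function.Injective lam)
    (heig : ∀ j, w j ᵥ* A = lam j • w j) {b : Fin n → R} (hb : ∀ j, w j ⬝ᵥ b ≠ 0) :
    (controllabilityMatrix A b).det ≠ 0 := by
  have hdet : (of w).det * (controllabilityMatrix A b).det =
      (∏ j, w j ⬝ᵥ b) * (vandermonde lam).det := by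
    rw [← det_mul, of_mul_controllabilityMatrix heig, det_mul, det_diagonal]
  have hprod : ∏ j, w j ⬝ᵥ b ≠ 0 := Finset.prod_ne_zero_iff.mpr fun j _ => hb j
  exact right_ne_zero_of_mul
    (hdet.trans_ne (mul_ne_zero hprod (det_vandermonde_ne_zero_iff.mpr hlam)))

end ControllabilityMatrix

theorem controllable_iff_det_controllabilityMatrix_ne_zero {n : ℕ}
    {A : Matrix (Fin n) (Fin n) ℂ} {b : Fin n → ℂ} :
    Controllable A b ↔ (controllabilityMatrix A b).det ≠ 0 := by
  have hcard : Fintype.card (Fin n) = Module.finrank ℂ (Fin n → ℂ) := by simp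
  rw [← isUnit_iff_ne_zero, ← isUnit_iff_isUnit_det, ← linearIndependent_cols_iff_isUnit]
  exact ⟨fun hspan => linearIndependent_of_top_le_span_of_card_eq_finrank hspan.ge hcard,
    fun hli => hli.span_eq_top_of_card_eq_finrank' hcard⟩

theorem ae_linearMap_ne_zero {E F : Type*} [NormedAddCommGroup E] [NormedSpace ℝ E]
    [FiniteDimensional ℝ E] [MeasurableSpace E] [BorelSpace E] [AddCommGroup F] [Module ℝ F]
    (μ : Measure E) [μ.IsAddHaarMeasure] {L : E →ₗ[ℝ] F} (hL : L ≠ 0) :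
    ∀ᵐ x ∂μ, L x ≠ 0 := by
  have hker : L.ker ≠ ⊤ := mt LinearMap.ker_eq_top.mp hL
  exact measure_eq_zero_iff_ae_notMem.mp (Measure.addHaar_submodule μ L.ker hker)

theorem ae_dotProduct_ne_zero {ι 𝕜 : Type*} [Fintype ι] [RCLike 𝕜] [MeasurableSpace 𝕜]
    [BorelSpace 𝕜] (μ : Measure (ι → 𝕜)) [μ.IsAddHaarMeasure] {a : ι → 𝕜} (ha : a ≠ 0) :
    ∀ᵐ c ∂μ, a ⬝ᵥ c ≠ 0 := by
  have hL : dotProductBilin 𝕜 ℝ a ≠ 0 := fun h =>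
    ha (dotProduct_eq_zero a (LinearMap.congr_fun h))
  exact ae_linearMap_ne_zero μ hL

theorem dotProduct_dite_mem_zero {ι R : Type*} [Fintype ι] [DecidableEq ι]
    [NonUnitalNonAssocSemiring R] (S : Finset ι) (v : ι → R) (c : S → R) :
    (v ⬝ᵥ fun i => if h : i ∈ S then c ⟨i, h⟩ else 0) = (fun k : S => v k) ⬝ᵥ c := by
  have hzero : ∀ i ∉ S, v i * (if h : i ∈ S then c ⟨i, h⟩ else 0) = 0 := fun i hi => by simp [hi]
  rw [dotProduct, ← Finset.sum_subset S.subset_univ fun i _ => hzero i, ← Finset.sum_coe_sort]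
  simp [dotProduct]

/-- for a matrix with distinct eigenvalues and left eigenvectors
`w j`, if `S` hits the support of every `w j`, then for almost every `c : S → ℂ`
the extension of `c` by zero gives a controllable pair `(A, b_c)`. -/
theorem stmt_9 {n : ℕ} (A : Matrix (Fin n) (Fin n) ℂ) (lam : Fin n → ℂ)
    (w : Fin n → Fin n → ℂ)
    (hdist : ∀ j j' : Fin n, j ≠ j' → lam j ≠ lam j')
    (hw : ∀ j, w j ≠ 0)
    (heig : ∀ j, Matrix.vecMul (w j) A = lam j • w j)
    (S : Finset (Fin n))
    (hS : ∀ j : Fin n, ∃ k ∈ S, w j k ≠ 0) :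
    ∀ᵐ c : ↥S → ℂ,
      Controllable A (fun i => if h : i ∈ S then c ⟨i, h⟩ else 0) := by
  have hlam : Function.Injective lam := fun j j' h => by_contra fun hne => hdist j j' hne h
  have hrestrict : ∀ j, (fun k : S => w j k) ≠ 0 := fun j =>
    let ⟨k, hk, hwk⟩ := hS j
    Function.ne_iff.mpr ⟨⟨k, hk⟩, hwk⟩
  filter_upwards [ae_all_iff.mpr fun j => ae_dotProduct_ne_zero volume (hrestrict j)] with c hc
  refine controllable_iff_det_controllabilityMatrix_ne_zero.mpr
    (det_controllabilityMatrix_ne_zero hlam heig fun j => ?_)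
  rw [dotProduct_dite_mem_zero]
  exact hc j
end

section
/- Let A : Matrix (Fin 5) (Fin 5) ℂ be the matrix with rows (3, 3/2, −3/2, −1, 1/2), (0, 2, 0, 0, 0), (−2, −3/2, 5/2, −1, −1/2), (0, 0, 0, 3, 0), (2, 3/2, 3/2, 1, 9/2). Then: (i) there exists b : Fin 5 → ℂ with exactly 3 nonzero entries (for instance b = (0, 1, 1, 1, 0)) such that the pair (A, b) is controllable; and (ii) for every b : Fin 5 → ℂ such that (A, b) is controllable, b has at least 3 nonzero entries. Hence the minimum of ‖b‖₀ over b making (A, b) controllable equals 3. -/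
open Matrix

/-- The illustrative example matrix from the paper. -/
noncomputable def Aex : Matrix (Fin 5) (Fin 5) ℂ :=
  !![3, 3/2, -3/2, -1, 1/2;
     0, 2, 0, 0, 0;
     -2, -3/2, 5/2, -1, -1/2;
     0, 0, 0, 3, 0;
     2, 3/2, 3/2, 1, 9/2]

/-!
`Aex` is diagonalizable with the distinct eigenvalues `1, …, 5`. If the rows of an invertible `V`
are left eigenvectors of `A` with eigenvalues `μ`, then `V` times the Kalman matrix of `(A, b)` is
`diagonal (V *ᵥ b)` times the Vandermonde matrix of `μ`, so for distinct eigenvalues `(A, b)` is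
controllable exactly when no left eigenvector annihilates `b`. For `Aex`, with indices from `0`, the
left eigenvectors `e₁`, `e₃` and `e₂ + e₄` have disjoint supports, and each forces its own nonzero
entry of `b`.
-/

section KalmanMatrix

variable {R : Type*} [CommRing R] {n : ℕ}

/-- The Kalman controllability matrix `[b, A b, …, A ^ (n - 1) b]` of the pair `(A, b)`, whose
determinant decides controllability. -/
def kalmanMatrix (A : Matrix (Fin n) (Fin n) R) (b : Fin n → R) : Matrix (Fin n) (Fin n) R :=
  Matrix.of fun i k => (A ^ (k : ℕ) *ᵥ b) i

theorem mul_kalmanMatrix_of_mul_eq_diagonal_mul {A V : Matrix (Fin n) (Fin n) R} {μ : Fin n → R}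
    (hVA : V * A = diagonal μ * V) (b : Fin n → R) :
    V * kalmanMatrix A b = diagonal (V *ᵥ b) * vandermonde μ := by
  ext i k
  have hpow : V * A ^ (k : ℕ) = diagonal μ ^ (k : ℕ) * V := SemiconjBy.pow_right hVA k
  calc (V * kalmanMatrix A b) i k
      = (V *ᵥ (A ^ (k : ℕ) *ᵥ b)) i := rfl
    _ = (diagonal (μ ^ (k : ℕ)) *ᵥ (V *ᵥ b)) i := by
      rw [mulVec_mulVec, hpow, diagonal_pow, mulVec_mulVec]
    _ = (diagonal (V *ᵥ b) * vandermonde μ) i k := by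
      rw [mulVec_diagonal, diagonal_mul, vandermonde_apply, Pi.pow_apply, mul_comm]

end KalmanMatrix

section Controllable

variable {n : ℕ} {A V : Matrix (Fin n) (Fin n) ℂ} {μ : Fin n → ℂ} {b : Fin n → ℂ}

theorem controllable_iff_det_kalmanMatrix_ne_zero :
    Controllable A b ↔ (kalmanMatrix A b).det ≠ 0 := by
  have hspan : Controllable A b ↔ LinearMap.range (kalmanMatrix A b).mulVecLin = ⊤ := by
    rw [range_mulVecLin]
    rfl
  rw [hspan, LinearMap.range_eq_top, coe_mulVecLin, mulVec_surjective_iff_isUnit,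
    isUnit_iff_isUnit_det, isUnit_iff_ne_zero]

theorem controllable_iff_of_mul_eq_diagonal_mul (hV : V.det ≠ 0)
    (hVA : V * A = diagonal μ * V) :
    Controllable A b ↔ (∀ i, (V *ᵥ b) i ≠ 0) ∧ Function.Injective μ := by
  have hdet : V.det * (kalmanMatrix A b).det = (∏ i, (V *ᵥ b) i) * (vandermonde μ).det := by
    rw [← det_mul, mul_kalmanMatrix_of_mul_eq_diagonal_mul hVA, det_mul, det_diagonal]
  calc Controllable A b
      ↔ V.det * (kalmanMatrix A b).det ≠ 0 := by
        rw [controllable_iff_det_kalmanMatrix_ne_zero, mul_ne_zero_iff_left hV]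
    _ ↔ (∀ i, (V *ᵥ b) i ≠ 0) ∧ Function.Injective μ := by
        rw [hdet, mul_ne_zero_iff, Finset.prod_ne_zero_iff, det_vandermonde_ne_zero_iff]
        simp only [Finset.mem_univ, forall_const]

end Controllable

section Example

/-- The matrix whose `i`-th row is a left eigenvector of `Aex` for the eigenvalue `i + 1`;
it diagonalizes `Aex`. -/
def leftEigenvectorsAex : Matrix (Fin 5) (Fin 5) ℂ :=
  !![1, 0, 1, 1, 0;
     0, 1, 0, 0, 0;
     0, 0, 0, 1, 0;
     0, 0, 1, 0, 1;
     1, 1, 0, 0, 1]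

theorem leftEigenvectorsAex_mul_Aex :
    leftEigenvectorsAex * Aex = diagonal ![1, 2, 3, 4, 5] * leftEigenvectorsAex := by
  ext i j
  rw [diagonal_mul]
  fin_cases i <;> fin_cases j <;>
    simp [leftEigenvectorsAex, Aex, mul_apply, Fin.sum_univ_five] <;> norm_num

theorem det_leftEigenvectorsAex : leftEigenvectorsAex.det = -2 := by
  simp [leftEigenvectorsAex, det_succ_row_zero, Fin.sum_univ_succ, Fin.succAbove, ← neg_add,
    one_add_one_eq_two]

theorem controllable_Aex_iff {b : Fin 5 → ℂ} :
    Controllable Aex b ↔ b 0 + b 2 + b 3 ≠ 0 ∧ b 1 ≠ 0 ∧ b 3 ≠ 0 ∧ b 2 + b 4 ≠ 0 ∧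
      b 0 + b 1 + b 4 ≠ 0 := by
  have hdet : leftEigenvectorsAex.det ≠ 0 := by
    rw [det_leftEigenvectorsAex]
    norm_num
  have hinj : Function.Injective (![1, 2, 3, 4, 5] : Fin 5 → ℂ) := by
    intro i j
    fin_cases i <;> fin_cases j <;> simp
  rw [controllable_iff_of_mul_eq_diagonal_mul hdet leftEigenvectorsAex_mul_Aex, and_iff_left hinj]
  simp [Fin.forall_fin_succ, leftEigenvectorsAex, mulVec, dotProduct, Fin.sum_univ_five]

theorem controllable_Aex_zero_one_one_one_zero : Controllable Aex ![0, 1, 1, 1, 0] := by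
  simp [controllable_Aex_iff, one_add_one_eq_two]

theorem ncard_support_zero_one_one_one_zero :
    {i : Fin 5 | (![0, 1, 1, 1, 0] : Fin 5 → ℂ) i ≠ 0}.ncard = 3 := by
  refine Set.ncard_eq_three.2 ⟨1, 2, 3, by decide, by decide, by decide, ?_⟩
  ext i
  fin_cases i <;> simp

theorem three_le_ncard_support_of_controllable_Aex {b : Fin 5 → ℂ} (hb : Controllable Aex b) :
    3 ≤ {i : Fin 5 | b i ≠ 0}.ncard := by
  obtain ⟨-, hb₁, hb₃, hb₂₄, -⟩ := controllable_Aex_iff.1 hb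
  obtain ⟨j, hj₁, hj₃, hbj⟩ : ∃ j : Fin 5, j ≠ 1 ∧ j ≠ 3 ∧ b j ≠ 0 := by
    by_cases hb₂ : b 2 = 0
    · exact ⟨4, by decide, by decide, by rwa [hb₂, zero_add] at hb₂₄⟩
    · exact ⟨2, by decide, by decide, hb₂⟩
  calc 3 = ({j, 1, 3} : Set (Fin 5)).ncard :=
        (Set.ncard_eq_three.2 ⟨j, 1, 3, hj₁, hj₃, by decide, rfl⟩).symm
    _ ≤ {i : Fin 5 | b i ≠ 0}.ncard := Set.ncard_le_ncard (by
        rintro i (rfl | rfl | rfl)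
        exacts [hbj, hb₁, hb₃])

theorem isLeast_ncard_support_controllable_Aex :
    IsLeast {m : ℕ | ∃ b : Fin 5 → ℂ,
      Controllable Aex b ∧ {i : Fin 5 | b i ≠ 0}.ncard = m} 3 := by
  refine ⟨⟨_, controllable_Aex_zero_one_one_one_zero, ncard_support_zero_one_one_one_zero⟩, ?_⟩
  rintro m ⟨b, hb, rfl⟩
  exact three_le_ncard_support_of_controllable_Aex hb

end Example

/-- the input vector `b = (0,1,1,1,0)` with exactly `3` nonzero
entries makes `(A, b)` controllable, no `b` with fewer than `3` nonzero entries
does, and hence the minimum of `‖b‖₀` over controllable pairs equals `3`. -/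
theorem stmt_14 :
    (Controllable Aex ![0, 1, 1, 1, 0] ∧
      {i : Fin 5 | (![0, 1, 1, 1, 0] : Fin 5 → ℂ) i ≠ 0}.ncard = 3) ∧
    (∃ b : Fin 5 → ℂ, {i : Fin 5 | b i ≠ 0}.ncard = 3 ∧ Controllable Aex b) ∧
    (∀ b : Fin 5 → ℂ, Controllable Aex b → 3 ≤ {i : Fin 5 | b i ≠ 0}.ncard) ∧
    sInf {m : ℕ | ∃ b : Fin 5 → ℂ,
        Controllable Aex b ∧ {i : Fin 5 | b i ≠ 0}.ncard = m} = 3 := by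
  have hctrl := controllable_Aex_zero_one_one_one_zero
  have hcard := ncard_support_zero_one_one_one_zero
  exact ⟨⟨hctrl, hcard⟩, ⟨_, hcard, hctrl⟩,
    fun _ hb => three_le_ncard_support_of_controllable_Aex hb,
    isLeast_ncard_support_controllable_Aex.csInf_eq⟩
end
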